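/- Let Γ = (A, R) be an AFRA and let Ω be a chain (totally ordered by set inclusion) of admissible subsets of A ∪ R. Then the union ⋃_{ω ∈ Ω} ω is admissible. Consequently, the collection of all admissible sets of Γ forms a complete partial order w.r.t. set inclusion, with least element ∅. -/

import Mathlib

/-!
Both halves of admissibility pass to the union of a chain. A conflict involves only two
elements, and in a chain any two elements of the union lie in a common member, which is
conflict-free. An element of the union is defended by the member containing it, hence by the
larger union. The empty set is vacuously admissible and is the least set.
-/

/-- An Argumentation Framework with Recursive Attacks: a set (type) of
arguments, a set (type) of attacks, each attack having a source argument
and a target which is either an argument or an attack. -/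
structure AFRA where
  Arg : Type
  Att : Type
  src : Att → Arg
  trg : Att → Arg ⊕ Att

namespace AFRA

/-- The elements of an AFRA: arguments and attacks. -/
abbrev El (Γ : AFRA) : Type := Γ.Arg ⊕ Γ.Att

variable (Γ : AFRA)

/-- An attack `α` defeats `V` iff `V = trg α` (direct defeat) or `V` is an
attack whose source is `trg α` (indirect defeat). -/
def Defeats (α : Γ.Att) (V : Γ.El) : Prop :=
  V = Γ.trg α ∨ ∃ β : Γ.Att, V = Sum.inr β ∧ Γ.trg α = Sum.inl (Γ.src β)

/-- `W` is acceptable w.r.t. `S` iff every attack defeating `W` is defeated by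
some attack in `S`. -/
def Acceptable (S : Set Γ.El) (W : Γ.El) : Prop :=
  ∀ α : Γ.Att, Γ.Defeats α W → ∃ β : Γ.Att, Sum.inr β ∈ S ∧ Γ.Defeats β (Sum.inr α)

/-- `S` is conflict-free iff no element of `S` defeats another element of `S`. -/
def ConflictFree (S : Set Γ.El) : Prop :=
  ¬ ∃ α : Γ.Att, Sum.inr α ∈ S ∧ ∃ W ∈ S, Γ.Defeats α W

/-- The characteristic function of an AFRA. -/
def charFun (S : Set Γ.El) : Set Γ.El := {V | Γ.Acceptable S V}

/-- `S` is admissible iff it is conflict-free and all its elements are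
acceptable w.r.t. `S`. -/
def Admissible (S : Set Γ.El) : Prop :=
  Γ.ConflictFree S ∧ ∀ V ∈ S, Γ.Acceptable S V

/-- `S` is a complete extension iff it is admissible and contains every
element acceptable w.r.t. it. -/
def Complete (S : Set Γ.El) : Prop :=
  Γ.Admissible S ∧ ∀ V : Γ.El, Γ.Acceptable S V → V ∈ S

/-- `S` is a preferred extension iff it is a maximal admissible set. -/
def Preferred (S : Set Γ.El) : Prop :=
  Γ.Admissible S ∧ ∀ T : Set Γ.El, Γ.Admissible T → S ⊆ T → S = T

/-- `S` is a stable extension iff it is conflict-free and defeats every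
element outside of it. -/
def Stable (S : Set Γ.El) : Prop :=
  Γ.ConflictFree S ∧ ∀ V : Γ.El, V ∉ S → ∃ α : Γ.Att, Sum.inr α ∈ S ∧ Γ.Defeats α V

/-- The range of `S`: `S` together with everything defeated by `S`. -/
def range (S : Set Γ.El) : Set Γ.El :=
  S ∪ {V : Γ.El | ∃ α : Γ.Att, Sum.inr α ∈ S ∧ Γ.Defeats α V}

/-- `S` is a semi-stable extension iff it is a complete extension with
maximal range among complete extensions. -/
def SemiStable (S : Set Γ.El) : Prop :=
  Γ.Complete S ∧ ∀ T : Set Γ.El, Γ.Complete T → Γ.range S ⊆ Γ.range T → Γ.range T = Γ.range S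

/-- `S` is ideal iff it is admissible and contained in every preferred
extension. -/
def Ideal (S : Set Γ.El) : Prop :=
  Γ.Admissible S ∧ ∀ P : Set Γ.El, Γ.Preferred P → S ⊆ P

/-- An AFRA is an AF when every attack targets an argument. -/
def IsAF : Prop := ∀ α : Γ.Att, ∃ a : Γ.Arg, Γ.trg α = Sum.inl a

/-- The Dung attack relation between arguments. -/
def AttacksAF (a b : Γ.Arg) : Prop :=
  ∃ α : Γ.Att, Γ.src α = a ∧ Γ.trg α = Sum.inl b

/-- D-conflict-freeness of a set of arguments. -/
def DConflictFree (U : Set Γ.Arg) : Prop :=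
  ¬ ∃ a ∈ U, ∃ b ∈ U, Γ.AttacksAF a b

/-- D-acceptability of an argument w.r.t. a set of arguments. -/
def DAcceptable (U : Set Γ.Arg) (a : Γ.Arg) : Prop :=
  ∀ b : Γ.Arg, Γ.AttacksAF b a → ∃ c ∈ U, Γ.AttacksAF c b

/-- The D-characteristic function on sets of arguments. -/
def dCharFun (U : Set Γ.Arg) : Set Γ.Arg := {a | Γ.DAcceptable U a}

/-- D-admissibility of a set of arguments. -/
def DAdmissible (U : Set Γ.Arg) : Prop :=
  Γ.DConflictFree U ∧ ∀ a ∈ U, Γ.DAcceptable U a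

/-- D-complete extensions. -/
def DComplete (U : Set Γ.Arg) : Prop :=
  Γ.DAdmissible U ∧ ∀ a : Γ.Arg, Γ.DAcceptable U a → a ∈ U

/-- D-preferred extensions: maximal D-admissible sets. -/
def DPreferred (U : Set Γ.Arg) : Prop :=
  Γ.DAdmissible U ∧ ∀ W : Set Γ.Arg, Γ.DAdmissible W → U ⊆ W → U = W

/-- The operator completing a set of arguments with all attacks arising
from it. -/
def Ext (U : Set Γ.Arg) : Set Γ.El :=
  (Sum.inl '' U) ∪ (Sum.inr '' {α : Γ.Att | Γ.src α ∈ U})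

end AFRA

/-- The union of a chain of admissible sets is admissible; consequently the
admissible sets form a complete partial order with least element `∅`. -/
theorem stmt_5 (Γ : AFRA) (Ω : Set (Set Γ.El))
    (hchain : IsChain (· ⊆ ·) Ω) (hadm : ∀ ω ∈ Ω, Γ.Admissible ω) :
    Γ.Admissible (⋃₀ Ω) ∧ Γ.Admissible (∅ : Set Γ.El) ∧
      ∀ S : Set Γ.El, Γ.Admissible S → (∅ : Set Γ.El) ⊆ S := by
  -- Two elements of the union lie in members of `Ω` that are comparable, so a conflict
  -- between them would already occur inside the larger of the two.
  refine ⟨⟨?_, ?_⟩, ⟨?_, ?_⟩, fun S _ => Set.empty_subset S⟩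
  · rintro ⟨α, ⟨ω₁, h₁, hα⟩, W, ⟨ω₂, h₂, hW⟩, hdef⟩
    rcases hchain.total h₁ h₂ with h | h
    · exact (hadm ω₂ h₂).1 ⟨α, h hα, W, hW, hdef⟩
    · exact (hadm ω₁ h₁).1 ⟨α, hα, W, h hW, hdef⟩
  -- Acceptability is monotone in the defending set.
  · rintro V ⟨ω, hω, hV⟩ α hα
    obtain ⟨β, hβ, hdef⟩ := (hadm ω hω).2 V hV α hα
    exact ⟨β, ⟨ω, hω, hβ⟩, hdef⟩
  · rintro ⟨α, hα, _⟩
    exact hα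
  · intro V hV
    exact hV.elim
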